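/- Let p ≥ 7 be a prime with p ≡ 3 (mod 4). Then v_p(G_p(p)) ≥ 6 if and only if B_{p−3} ≡ 0 (mod p); equivalently, v_p(G_p(p)) = 5 if and only if B_{p−3} ≢ 0 (mod p). -/

import Mathlib

noncomputable section

/-- `i` in the Gaussian integers. -/
def Ig : GaussianInt := ⟨0, 1⟩

/-- Classical power sum `S_r(N) = ∑_{t=1}^N t^r`. -/
def Sps (r N : ℕ) : ℤ := ∑ t ∈ Finset.Icc 1 N, (t : ℤ) ^ r

/-- Gaussian power sum `F_n(k,m) = ∑_{a=1}^k ∑_{b=1}^m (a+bi)^n`. -/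
def Fg (n k m : ℕ) : GaussianInt :=
  ∑ a ∈ Finset.Icc 1 k, ∑ b ∈ Finset.Icc 1 m, ((a : GaussianInt) + (b : GaussianInt) * Ig) ^ n

/-- Square Gaussian power sum `G_n(N) = F_n(N-1,N-1)`. -/
def Gg (n N : ℕ) : GaussianInt := Fg n (N - 1) (N - 1)

open Finset

/-! ### Symmetries of the square Gaussian power sums -/

lemma Ig_mul_Ig : Ig * Ig = -1 := by
  ext <;> simp [Ig]

lemma sum_Icc_one_reflect {M : Type*} [AddCommMonoid M] (N : ℕ) (f : ℕ → M) :
    ∑ a ∈ Icc 1 (N - 1), f (N - a) = ∑ a ∈ Icc 1 (N - 1), f a := by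
  refine sum_nbij' (fun a => N - a) (fun a => N - a) ?_ ?_ ?_ ?_ ?_ <;>
    (intro a ha; rw [mem_Icc] at ha)
  · rw [mem_Icc]; omega
  · rw [mem_Icc]; omega
  · omega
  · omega

lemma sum_range_eq_sum_Icc {M : Type*} [AddCommMonoid M] (N : ℕ) {f : ℕ → M} (h0 : f 0 = 0) :
    ∑ t ∈ range N, f t = ∑ t ∈ Icc 1 (N - 1), f t := by
  refine (sum_subset (fun t ht => ?_) fun t ht ht' => ?_).symm
  · rw [mem_Icc] at ht
    rw [mem_range]
    omega
  · rw [mem_range] at ht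
    rw [mem_Icc] at ht'
    obtain rfl : t = 0 := by omega
    exact h0

/-- The quarter turn `z ↦ N + i z` permutes the summation square. -/
lemma Gg_eq_sum_rotate (n N : ℕ) :
    Gg n N = ∑ a ∈ Icc 1 (N - 1), ∑ b ∈ Icc 1 (N - 1),
      ((N : GaussianInt) + Ig * ((a : GaussianInt) + (b : GaussianInt) * Ig)) ^ n := by
  have key : ∀ a, ∑ b ∈ Icc 1 (N - 1),
      ((N : GaussianInt) + Ig * ((a : GaussianInt) + (b : GaussianInt) * Ig)) ^ n =
      ∑ b ∈ Icc 1 (N - 1), ((b : GaussianInt) + (a : GaussianInt) * Ig) ^ n := by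
    intro a
    rw [← sum_Icc_one_reflect N (fun b => ((b : GaussianInt) + (a : GaussianInt) * Ig) ^ n)]
    refine sum_congr rfl fun b hb => ?_
    rw [mem_Icc] at hb
    rw [Nat.cast_sub (by omega)]
    congr 1
    linear_combination (b : GaussianInt) * Ig_mul_Ig
  simp_rw [key]
  rw [sum_comm]
  rfl

lemma Gg_rotate_expand (n N : ℕ) :
    Gg n N = ∑ k ∈ range (n + 1),
      (n.choose k : GaussianInt) * (N : GaussianInt) ^ k * Ig ^ (n - k) * Gg (n - k) N := by
  rw [Gg_eq_sum_rotate]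
  simp_rw [add_pow, mul_pow]
  simp_rw [sum_comm (s := Icc 1 (N - 1)) (t := range (n + 1))]
  refine sum_congr rfl fun k _ => ?_
  simp_rw [Gg, Fg, mul_sum]
  exact sum_congr rfl fun a _ => sum_congr rfl fun b _ => by ring

/-- Reflection in the diagonal. -/
lemma Gg_eq_pow_mul_star (n N : ℕ) : Gg n N = Ig ^ n * star (Gg n N) := by
  conv_lhs => rw [Gg, Fg, sum_comm]
  simp_rw [Gg, Fg, star_sum, mul_sum, star_pow, ← mul_pow]
  refine sum_congr rfl fun a _ => sum_congr rfl fun b _ => ?_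
  congr 1
  ext <;> simp [Ig]

lemma Ig_pow_of_mod_four_eq_three {n : ℕ} (h : n % 4 = 3) : Ig ^ n = -Ig := by
  have h4 : Ig ^ 4 = 1 := by linear_combination (Ig * Ig - 1) * Ig_mul_Ig
  rw [← Nat.div_add_mod n 4, h, pow_add, pow_mul, h4, one_pow]
  linear_combination Ig * Ig_mul_Ig

lemma Gg_im_eq_neg_re {n : ℕ} (N : ℕ) (h : n % 4 = 3) : (Gg n N).im = -(Gg n N).re := by
  have := congrArg Zsqrtd.im (Gg_eq_pow_mul_star n N)
  rw [Ig_pow_of_mod_four_eq_three h] at this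
  simpa [Ig] using this

/-! ### Parity of the real part -/

lemma re_im_odd_pow_mod_two (z : GaussianInt) (k : ℕ) :
    ((z ^ (2 * k + 3)).re : ZMod 2) = z.re * (z.re + z.im) ∧
    ((z ^ (2 * k + 3)).im : ZMod 2) = z.im * (z.re + z.im) := by
  induction k with
  | zero =>
    simp only [mul_zero, zero_add, pow_succ, pow_zero, one_mul, Zsqrtd.re_mul, Zsqrtd.im_mul]
    push_cast
    generalize (z.re : ZMod 2) = x
    generalize (z.im : ZMod 2) = y
    revert x y
    decide
  | succ k ih =>
    rw [show 2 * (k + 1) + 3 = (2 * k + 3) + 1 + 1 by ring, pow_succ, pow_succ]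
    simp only [Zsqrtd.re_mul, Zsqrtd.im_mul]
    push_cast
    rw [ih.1, ih.2]
    generalize (z.re : ZMod 2) = x
    generalize (z.im : ZMod 2) = y
    revert x y
    decide

lemma sum_Icc_cast_mod_two (k : ℕ) : ∑ a ∈ Icc 1 (4 * k + 2), (a : ZMod 2) = 1 := by
  have h2 : (2 : ZMod 2) = 0 := rfl
  induction k with
  | zero => decide
  | succ k ih =>
    rw [show 4 * (k + 1) + 2 = 4 * k + 2 + 1 + 1 + 1 + 1 by ring]
    rw [sum_Icc_succ_top (by omega), sum_Icc_succ_top (by omega), sum_Icc_succ_top (by omega),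
      sum_Icc_succ_top (by omega), ih]
    push_cast
    linear_combination (8 * (k : ZMod 2) + 9) * h2

lemma re_finset_sum {ι : Type*} (s : Finset ι) (f : ι → GaussianInt) :
    (∑ i ∈ s, f i).re = ∑ i ∈ s, (f i).re := by
  classical
  induction s using Finset.induction_on with
  | empty => simp
  | insert a s ha ih => rw [sum_insert ha, sum_insert ha, Zsqrtd.re_add, ih]

lemma Gg_re_ne_zero {p : ℕ} (h3 : p % 4 = 3) : (Gg p p).re ≠ 0 := by
  obtain ⟨k, rfl⟩ : ∃ k, p = 4 * k + 3 := ⟨p / 4, by omega⟩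
  suffices h : ((Gg (4 * k + 3) (4 * k + 3)).re : ZMod 2) = 1 by
    intro h0
    rw [h0] at h
    revert h
    decide
  have hz : ∀ a b : ℕ,
      ((((a : GaussianInt) + (b : GaussianInt) * Ig) ^ (4 * k + 3)).re : ZMod 2) =
        a * a + a * b := by
    intro a b
    have := (re_im_odd_pow_mod_two ((a : GaussianInt) + (b : GaussianInt) * Ig) (2 * k)).1
    rw [show 2 * (2 * k) + 3 = 4 * k + 3 by ring] at this
    rw [this]
    simp [Ig]
    ring
  rw [Gg, Fg, re_finset_sum]
  simp_rw [re_finset_sum]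
  push_cast
  simp_rw [hz, sum_add_distrib, ← mul_sum, ← sum_mul]
  have h2 : ((4 * k + 2 : ℕ) : ZMod 2) = 0 := by
    rw [ZMod.natCast_eq_zero_iff]
    omega
  simp only [sum_const, Nat.card_Icc, nsmul_eq_mul,
    show 4 * k + 3 - 1 = 4 * k + 2 by omega, h2, sum_Icc_cast_mod_two]
  simp

/-! ### Power sums modulo `p` -/

lemma dvd_Sps {p : ℕ} (hp : p.Prime) {r : ℕ} (hr : 0 < r) (hr' : r < p - 1) :
    (p : ℤ) ∣ Sps r (p - 1) := by
  have := Fact.mk hp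
  rw [← ZMod.intCast_zmod_eq_zero_iff_dvd, Sps]
  push_cast
  have h := FiniteField.sum_pow_lt_card_sub_one (K := ZMod p) r (by rwa [ZMod.card])
  rw [← h]
  rw [← sum_range_eq_sum_Icc p (f := fun t : ℕ => (t : ZMod p) ^ r) (by simp [hr.ne'])]
  refine sum_bij' (fun t _ => (t : ZMod p)) (fun x _ => x.val) ?_ ?_ ?_ ?_ ?_
  · simp
  · intro x _; simpa using ZMod.val_lt x
  · intro t ht; exact ZMod.val_cast_of_lt (mem_range.1 ht)
  · intro x _; exact ZMod.natCast_zmod_val x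
  · simp

lemma Gg_eq_sum_Sps (n N : ℕ) :
    Gg n N = ∑ k ∈ range (n + 1),
      (Sps k (N - 1) : GaussianInt) * (Sps (n - k) (N - 1) : GaussianInt) *
        Ig ^ (n - k) * (n.choose k : GaussianInt) := by
  simp_rw [Gg, Fg, add_pow, mul_pow]
  simp_rw [sum_comm (s := Icc 1 (N - 1)) (t := range (n + 1))]
  refine sum_congr rfl fun k _ => ?_
  simp_rw [Sps]
  push_cast
  rw [sum_mul_sum, sum_mul, sum_mul]
  refine sum_congr rfl fun a _ => ?_
  rw [sum_mul, sum_mul]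
  exact sum_congr rfl fun b _ => by ring

lemma Gg_modEq_sq {p : ℕ} (hp : p.Prime) {n : ℕ} (hn : 0 < n) (hn' : n < p - 1) :
    (p : GaussianInt) ^ 2 ∣
      Gg n p - ((p : GaussianInt) - 1) * (1 + Ig ^ n) * (Sps n (p - 1) : GaussianInt) := by
  have hS0 : (Sps 0 (p - 1) : GaussianInt) = (p : GaussianInt) - 1 := by
    simp [Sps, Nat.cast_sub hp.one_le]
  have hdvd : ∀ r, 0 < r → r < p - 1 → (p : GaussianInt) ∣ (Sps r (p - 1) : GaussianInt) := by
    intro r h1 h2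
    have := map_dvd (Int.castRingHom GaussianInt) (dvd_Sps hp h1 h2)
    simpa using this
  obtain ⟨m, rfl⟩ : ∃ m, n = m + 1 := ⟨n - 1, by omega⟩
  rw [Gg_eq_sum_Sps, sum_range_succ, sum_range_succ', Nat.sub_self, Nat.sub_zero, hS0]
  simp only [pow_zero, Nat.choose_self, Nat.choose_zero_right, Nat.cast_one, mul_one]
  have : (p : GaussianInt) ^ 2 ∣ ∑ k ∈ range m,
      (Sps (k + 1) (p - 1) : GaussianInt) * (Sps (m + 1 - (k + 1)) (p - 1) : GaussianInt) *
        Ig ^ (m + 1 - (k + 1)) * ((m + 1).choose (k + 1) : GaussianInt) := by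
    refine dvd_sum fun k hk => ?_
    rw [mem_range] at hk
    rw [sq]
    exact ((mul_dvd_mul (hdvd _ (by omega) (by omega)) (hdvd _ (by omega) (by omega))).mul_right
      _).mul_right _
  convert this using 1
  ring

/-! ### The supercongruence -/

lemma two_mul_choose_two (n : ℕ) : 2 * ((n + 2).choose 2) = (n + 2) * (n + 1) := by
  have h := Nat.add_one_mul_choose_eq (n + 1) 1
  simp at h
  linarith

lemma six_mul_choose_three (n : ℕ) : 6 * ((n + 3).choose 3) = (n + 3) * (n + 2) * (n + 1) := by
  have h := Nat.add_one_mul_choose_eq (n + 2) 2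
  have h2 := two_mul_choose_two n
  simp only [show n + 2 + 1 = n + 3 by ring, show 2 + 1 = 3 by rfl] at h
  nlinarith

/-- Terms of the rotation expansion from index `j` on are divisible by `N ^ j`. -/
lemma Gg_rotate_truncate (j m N : ℕ) :
    (N : GaussianInt) ^ j ∣ Gg (j + m) N - ∑ k ∈ range j,
      ((j + m).choose k : GaussianInt) * (N : GaussianInt) ^ k * Ig ^ (j + m - k) *
        Gg (j + m - k) N := by
  conv => enter [2, 1]; rw [Gg_rotate_expand]
  rw [add_assoc, sum_range_add, add_sub_cancel_left]
  refine dvd_sum fun k _ => ?_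
  exact (((pow_dvd_pow _ (Nat.le_add_right j k)).mul_left _).mul_right _).mul_right _

/-- For a prime exponent the remainder gains one more factor. -/
lemma Gg_rotate_truncate_prime {p m : ℕ} (hp : p.Prime) (hpm : p = 5 + m) (hm : 0 < m) :
    (p : GaussianInt) ^ 6 ∣ Gg p p - ∑ k ∈ range 5,
      (p.choose k : GaussianInt) * (p : GaussianInt) ^ k * Ig ^ (p - k) * Gg (p - k) p := by
  conv => enter [2, 1]; rw [Gg_rotate_expand]
  rw [show p + 1 = 5 + (m + 1) by omega, sum_range_add, add_sub_cancel_left]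
  refine dvd_sum fun k hk => ?_
  rw [mem_range] at hk
  refine (Dvd.dvd.mul_right ?_ _).mul_right _
  rcases eq_or_ne (5 + k) p with h | h
  · exact (pow_dvd_pow _ (by omega)).mul_left _
  · rw [pow_succ']
    exact mul_dvd_mul (Nat.cast_dvd_cast (hp.dvd_choose_self (by omega) (by omega)))
      (pow_dvd_pow _ (by omega))

lemma Gg_supercongruence {p : ℕ} (hp : p.Prime) (hp7 : 7 ≤ p) (h3 : p % 4 = 3) {s : ℤ}
    (hs : Sps (p - 3) (p - 1) = p * s) :
    (p : GaussianInt) ^ 6 ∣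
      24 * Gg p p - 4 * (p : GaussianInt) ^ 5 * (s : GaussianInt) * (1 - Ig) := by
  obtain ⟨m, rfl⟩ : ∃ m, p = m + 4 := ⟨p - 4, by omega⟩
  have hI := Ig_mul_Ig
  have hI0 : Ig ^ m = -Ig := Ig_pow_of_mod_four_eq_three (by omega)
  have hI1 : Ig ^ (m + 1) = 1 := by rw [pow_succ, hI0]; linear_combination -hI
  have hI2 : Ig ^ (m + 2) = Ig := by rw [pow_succ, hI1, one_mul]
  have hI3 : Ig ^ (m + 3) = -1 := by rw [pow_succ, hI2, hI]
  have hI4 : Ig ^ (m + 4) = -Ig := by rw [pow_succ, hI3]; ring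
  obtain ⟨u, hu⟩ := Gg_modEq_sq hp (n := m) (by omega) (by omega)
  obtain ⟨v, hv⟩ := Gg_modEq_sq hp (n := m + 1) (by omega) (by omega)
  obtain ⟨t, ht⟩ := dvd_Sps hp (r := m) (by omega) (by omega)
  obtain ⟨x, hx⟩ := Gg_rotate_truncate 3 (m - 1) (m + 4)
  obtain ⟨y, hy⟩ := Gg_rotate_truncate 4 (m - 1) (m + 4)
  obtain ⟨z, hz⟩ := Gg_rotate_truncate_prime (m := m - 1) hp (by omega) (by omega)
  obtain ⟨c, hc⟩ := hp.dvd_choose_self (k := 4) (by omega) (by omega)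
  have e2 := two_mul_choose_two (m + 2)
  have e3 := six_mul_choose_three (m + 1)
  have e2' := two_mul_choose_two (m + 1)
  rw [show m + 4 - 3 = m + 1 by omega] at hs
  rw [hs, hI1] at hv
  rw [ht, hI0] at hu
  rw [show 3 + (m - 1) = m + 2 by omega] at hx
  rw [show 4 + (m - 1) = m + 3 by omega] at hy
  simp only [sum_range_succ, sum_range_zero, zero_add, Nat.sub_zero, Nat.choose_zero_right,
    Nat.choose_one_right, pow_zero, pow_one, Nat.cast_one, one_mul, mul_one,
    show m + 2 - 1 = m + 1 by omega, show m + 2 - 2 = m by omega,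
    show m + 3 - 1 = m + 2 by omega, show m + 3 - 2 = m + 1 by omega,
    show m + 3 - 3 = m by omega,
    show m + 4 - 1 = m + 3 by omega, show m + 4 - 2 = m + 2 by omega,
    show m + 4 - 3 = m + 1 by omega, show m + 4 - 4 = m by omega,
    hI0, hI1, hI2, hI3, hI4, hc] at hx hy hz
  replace e2 := congrArg (Nat.cast : ℕ → GaussianInt) e2
  replace e2' := congrArg (Nat.cast : ℕ → GaussianInt) e2'
  replace e3 := congrArg (Nat.cast : ℕ → GaussianInt) e3
  simp only [show m + 2 + 2 = m + 4 by ring, show m + 1 + 2 = m + 3 by ring] at e2 e2' e3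
  push_cast at e2 e2' e3 hu hv hx hy hz ⊢
  generalize ((m + 4).choose 2 : GaussianInt) = A2 at *
  generalize ((m + 4).choose 3 : GaussianInt) = A3 at *
  generalize ((m + 3).choose 2 : GaussianInt) = B2 at *
  generalize ((m + 3).choose 3 : GaussianInt) = B3 at *
  generalize ((m + 2).choose 2 : GaussianInt) = C2 at *
  generalize Gg m (m + 4) = g0 at *
  generalize Gg (m + 1) (m + 4) = g1 at *
  generalize Gg (m + 2) (m + 4) = g2 at *
  generalize Gg (m + 3) (m + 4) = g3 at *
  generalize Gg (m + 4) (m + 4) = g4 at *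
  generalize hP : (m : GaussianInt) + 4 = P at *
  have hm : (m : GaussianInt) = P - 4 := by rw [← hP]; ring
  rw [hm] at e2 e2' e3 hx hy
  obtain ⟨a, h0⟩ : ∃ a, g0 = P * a :=
    ⟨(P - 1) * (1 - Ig) * t + P * u, by linear_combination hu⟩
  obtain ⟨b, h1⟩ : ∃ b, g1 = -2 * P * s + P ^ 2 * b :=
    ⟨2 * s + v, by linear_combination hv⟩
  obtain ⟨d, h2⟩ : ∃ d, (1 - Ig) * g2 = 4 * P ^ 2 * s + P ^ 3 * d :=
    ⟨-2 * s + (P - 2) * b - Ig * C2 * a + x, by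
      linear_combination hx + (P - 2) * P * h1 - Ig * C2 * P ^ 2 * h0⟩
  obtain ⟨e, h3⟩ : ∃ e, 4 * (1 - Ig) * g3 = -4 * (1 + Ig) * P ^ 3 * s + P ^ 4 * e :=
    ⟨8 * Ig * s + 2 * Ig * (P - 1) * d + (1 - Ig) * ((P - 1) * (P - 2) * b - 2 * (P - 3) * s) -
      2 * (1 - Ig) * Ig * B3 * a + 2 * (1 - Ig) * y, by
      linear_combination 2 * (1 - Ig) * hy + 2 * Ig * (P - 1) * P * h2 +
        (1 - Ig) * P ^ 2 * g1 * e2' + (1 - Ig) * P ^ 2 * (P - 1) * (P - 2) * h1 -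
        2 * (1 - Ig) * Ig * B3 * P ^ 3 * h0⟩
  exact ⟨-3 * e + 24 * Ig * s + 6 * Ig * (P - 1) * d +
    2 * (1 - Ig) * ((P - 1) * (P - 2) * b - 2 * (P - 3) * s) -
    12 * (1 - Ig) * Ig * c * a + 12 * (1 - Ig) * z, by
    linear_combination 12 * (1 - Ig) * hz - 3 * P ^ 2 * h3 + 6 * Ig * P ^ 2 * (1 - Ig) * g2 * e2 +
      6 * Ig * P ^ 3 * (P - 1) * h2 + 2 * (1 - Ig) * P ^ 3 * g1 * e3 +
      2 * (1 - Ig) * P ^ 4 * (P - 1) * (P - 2) * h1 - 12 * (1 - Ig) * Ig * c * P ^ 5 * h0 +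
      12 * g4 * hI⟩

/-! ### Bernoulli numbers -/

/-- A common denominator, prime to `p`, of the Bernoulli numbers of index below `p - 1`. -/
lemma exists_common_den_bernoulli {p : ℕ} (hp : p.Prime) (n : ℕ) (hn : n < p) :
    ∃ D : ℤ, ¬ (p : ℤ) ∣ D ∧ ∀ i < n, ∃ z : ℤ, (D : ℚ) * bernoulli i = z := by
  induction n with
  | zero => exact ⟨1, by simpa [Int.natCast_dvd] using hp.one_lt.ne', by simp⟩
  | succ n ih =>
    obtain ⟨D, hD, h⟩ := ih (by omega)
    choose! f hf using h
    have hpZ := Nat.prime_iff_prime_int.1 hp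
    refine ⟨D * (n + 1), ?_, fun i hi => ?_⟩
    · intro hdvd
      rcases hpZ.dvd_or_dvd hdvd with h | h
      · exact hD h
      · have := Int.le_of_dvd (by positivity) h
        omega
    · rcases Nat.lt_succ_iff_lt_or_eq.1 hi with hi | rfl
      · refine ⟨f i * (n + 1), ?_⟩
        push_cast
        rw [← hf i hi]
        ring
      · have hs := sum_bernoulli (i + 1)
        rw [sum_range_succ, Nat.choose_succ_self_right] at hs
        have hsum : (D : ℚ) * ∑ k ∈ range i, ((i + 1).choose k : ℚ) * bernoulli k =
            ((∑ k ∈ range i, ((i + 1).choose k : ℤ) * f k : ℤ) : ℚ) := by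
          rw [mul_sum]
          push_cast
          refine sum_congr rfl fun k hk => ?_
          rw [← hf k (mem_range.1 hk)]
          ring
        refine ⟨D * (if i + 1 = 1 then 1 else 0) -
          ∑ k ∈ range i, ((i + 1).choose k : ℤ) * f k, ?_⟩
        rw [Int.cast_sub, ← hsum]
        push_cast at hs ⊢
        linear_combination (D : ℚ) * hs

lemma dvd_bernoulli_num_iff {p r : ℕ} (hp : p.Prime) (hr : 0 < r) (hr' : r + 2 ≤ p) :
    (p : ℤ) ∣ (bernoulli r).num ↔ (p : ℤ) ^ 2 ∣ Sps r (p - 1) := by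
  obtain ⟨D, hD, h⟩ := exists_common_den_bernoulli hp (r + 1) (by omega)
  choose! f hf using h
  have hpZ := Nat.prime_iff_prime_int.1 hp
  have hp0 : (p : ℤ) ≠ 0 := by exact_mod_cast hp.ne_zero
  have hr1 : ¬ (p : ℤ) ∣ (r + 1 : ℤ) := fun h => by
    have := Int.le_of_dvd (by positivity) h
    omega
  have hnum : D * (bernoulli r).num = (bernoulli r).den * f r := by
    have := hf r (by omega)
    rw [← Rat.num_div_den (bernoulli r)] at this
    have hd : ((bernoulli r).den : ℚ) ≠ 0 := by exact_mod_cast (bernoulli r).den_nz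
    field_simp at this
    exact_mod_cast this
  have hden : ¬ (p : ℤ) ∣ (bernoulli r).den := by
    intro h
    have h1 : (p : ℤ) ∣ (bernoulli r).num :=
      (hpZ.dvd_or_dvd (hnum ▸ h.mul_right _ : (p : ℤ) ∣ D * (bernoulli r).num)).resolve_left hD
    have hcop := (bernoulli r).reduced
    exact hp.one_lt.ne' (Nat.dvd_one.1 (hcop ▸ Nat.dvd_gcd (Int.natCast_dvd.1 h1)
      (Int.natCast_dvd_natCast.1 h)))
  have hS : D * (r + 1) * Sps r (p - 1) = p * ((r + 1) * f r) +
      p ^ 2 * ∑ i ∈ range r, f i * (r + 1).choose i * p ^ (r - 1 - i) := by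
    have hF := sum_range_pow p r
    have hrange : ∑ k ∈ range p, (k : ℚ) ^ r = (Sps r (p - 1) : ℚ) := by
      rw [sum_range_eq_sum_Icc p (by simp [hr.ne']), Sps]
      push_cast
      rfl
    rw [hrange, ← sum_div, eq_div_iff (by positivity), sum_range_succ] at hF
    have hsum : (D : ℚ) * ∑ i ∈ range r, bernoulli i * ((r + 1).choose i : ℚ) *
        (p : ℚ) ^ (r + 1 - i) =
        p ^ 2 * ∑ i ∈ range r, (f i : ℚ) * (r + 1).choose i * p ^ (r - 1 - i) := by
      rw [mul_sum, mul_sum]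
      refine sum_congr rfl fun i hi => ?_
      rw [mem_range] at hi
      rw [← hf i (by omega), show r + 1 - i = r - 1 - i + 2 by omega, pow_add]
      ring
    have hfr := hf r (by omega)
    rw [Nat.choose_succ_self_right, show r + 1 - r = 1 by omega] at hF
    have : (D : ℚ) * (r + 1) * Sps r (p - 1) = p * ((r + 1) * f r) +
        p ^ 2 * ∑ i ∈ range r, (f i : ℚ) * (r + 1).choose i * p ^ (r - 1 - i) := by
      rw [← hsum, ← hfr]
      push_cast at hF
      linear_combination (D : ℚ) * hF
    exact_mod_cast this
  have hcopD : IsCoprime ((p : ℤ) ^ 2) (D * (r + 1)) := by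
    refine IsCoprime.pow_left ((hpZ.irreducible.coprime_iff_not_dvd).2 ?_)
    exact fun h => (hpZ.dvd_or_dvd h).elim hD hr1
  calc (p : ℤ) ∣ (bernoulli r).num
      ↔ (p : ℤ) ∣ D * (bernoulli r).num :=
        ⟨fun h => h.mul_left _, fun h => (hpZ.dvd_or_dvd h).resolve_left hD⟩
    _ ↔ (p : ℤ) ∣ f r := by
        rw [hnum]
        exact ⟨fun h => (hpZ.dvd_or_dvd h).resolve_left hden, fun h => h.mul_left _⟩
    _ ↔ (p : ℤ) ∣ (r + 1) * f r :=
        ⟨fun h => h.mul_left _, fun h => (hpZ.dvd_or_dvd h).resolve_left hr1⟩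
    _ ↔ (p : ℤ) ^ 2 ∣ p * ((r + 1) * f r) := by
        rw [sq, mul_dvd_mul_iff_left hp0]
    _ ↔ (p : ℤ) ^ 2 ∣ D * (r + 1) * Sps r (p - 1) := by
        rw [hS]
        exact (dvd_add_left (dvd_mul_right _ _)).symm
    _ ↔ (p : ℤ) ^ 2 ∣ Sps r (p - 1) :=
        ⟨hcopD.dvd_of_dvd_mul_left, fun h => h.mul_left _⟩

theorem stmt16 (p : ℕ) (hp : p.Prime) (hp7 : 7 ≤ p) (h3 : p % 4 = 3) :
    (6 ≤ min (padicValInt p (Gg p p).re) (padicValInt p (Gg p p).im) ↔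
      (p : ℤ) ∣ (bernoulli (p - 3)).num) ∧
    (min (padicValInt p (Gg p p).re) (padicValInt p (Gg p p).im) = 5 ↔
      ¬ (p : ℤ) ∣ (bernoulli (p - 3)).num) := by
  have := Fact.mk hp
  obtain ⟨s, hs⟩ := dvd_Sps hp (r := p - 3) (by omega) (by omega)
  obtain ⟨w, hw⟩ := Gg_supercongruence hp hp7 h3 hs
  have hpZ := Nat.prime_iff_prime_int.1 hp
  have hp0 : (p : ℤ) ≠ 0 := by exact_mod_cast hp.ne_zero
  have hne := Gg_re_ne_zero h3
  have him : padicValInt p (Gg p p).im = padicValInt p (Gg p p).re := by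
    rw [Gg_im_eq_neg_re p h3, padicValInt, padicValInt, Int.natAbs_neg]
  have hre : 24 * (Gg p p).re = p ^ 5 * (4 * s) + p ^ 6 * w.re := by
    have hw' : 24 * Gg p p = ((4 * p ^ 5 * s : ℤ) : GaussianInt) * (1 - Ig) +
        ((p ^ 6 : ℤ) : GaussianInt) * w := by
      push_cast
      linear_combination hw
    have := congrArg Zsqrtd.re hw'
    rw [show (24 : GaussianInt) = ((24 : ℤ) : GaussianInt) by norm_cast] at this
    simp only [Zsqrtd.re_add, Zsqrtd.re_smul, Zsqrtd.re_sub, Zsqrtd.re_one, Ig, sub_zero,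
      mul_one] at this
    linear_combination this
  have h2 : ¬ (p : ℤ) ∣ 2 := fun h => by have := Int.le_of_dvd (by norm_num) h; omega
  have h3' : ¬ (p : ℤ) ∣ 3 := fun h => by have := Int.le_of_dvd (by norm_num) h; omega
  have h4 : ¬ (p : ℤ) ∣ 4 := fun h => by
    rw [show (4 : ℤ) = 2 * 2 by norm_num] at h
    exact (hpZ.dvd_or_dvd h).elim h2 h2
  have h24 : ¬ (p : ℤ) ∣ 24 := fun h => by
    rw [show (24 : ℤ) = 4 * (2 * 3) by norm_num] at h
    exact (hpZ.dvd_or_dvd h).elim h4 fun h => (hpZ.dvd_or_dvd h).elim h2 h3'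
  have hcop : ∀ k, IsCoprime ((p : ℤ) ^ k) 24 := fun k =>
    IsCoprime.pow_left ((hpZ.irreducible.coprime_iff_not_dvd).2 h24)
  have hd5 : (p : ℤ) ^ 5 ∣ (Gg p p).re :=
    (hcop 5).dvd_of_dvd_mul_left ⟨4 * s + p * w.re, by rw [hre]; ring⟩
  have hd6 : (p : ℤ) ^ 6 ∣ (Gg p p).re ↔ (p : ℤ) ∣ (bernoulli (p - 3)).num := by
    rw [dvd_bernoulli_num_iff hp (by omega) (by omega), hs]
    calc (p : ℤ) ^ 6 ∣ (Gg p p).re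
        ↔ (p : ℤ) ^ 6 ∣ 24 * (Gg p p).re :=
          ⟨fun h => h.mul_left _, (hcop 6).dvd_of_dvd_mul_left⟩
      _ ↔ (p : ℤ) ^ 6 ∣ p ^ 5 * (4 * s) := by rw [hre]; exact dvd_add_left (dvd_mul_right _ _)
      _ ↔ (p : ℤ) ∣ 4 * s := by rw [pow_succ, mul_dvd_mul_iff_left (pow_ne_zero _ hp0)]
      _ ↔ (p : ℤ) ∣ s := ⟨fun h => (hpZ.dvd_or_dvd h).resolve_left h4, fun h => h.mul_left _⟩
      _ ↔ (p : ℤ) ^ 2 ∣ p * s := by rw [sq, mul_dvd_mul_iff_left hp0]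
  have hval : ∀ k, (p : ℤ) ^ k ∣ (Gg p p).re ↔ k ≤ padicValInt p (Gg p p).re := fun k => by
    rw [padicValInt_dvd_iff, or_iff_right hne]
  rw [him, min_self, ← hd6, hval]
  have := (hval 5).1 hd5
  exact ⟨Iff.rfl, by omega⟩
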